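/- arXiv:1904.09849 — 3 statements merged into one kernel-verified Lean document; each statement's English description precedes it below -/
import Mathlib

section
/- Let X and Y be integrable real-valued random variables on a probability space with E[X] = 0 and E[Y] = 0, and suppose the distribution of X − Y is the Gaussian distribution on ℝ with mean 0 and variance σ², where σ ≥ 0. Then E[max(X, Y)] = σ/√(2π). -/
open MeasureTheory ProbabilityTheory

lemma integral_abs_gaussianReal_aux (σ : ℝ) (hσ : 0 < σ) :
    ∫ x, |x| ∂(gaussianReal 0 (Real.toNNReal (σ ^ 2))) = 2 * (σ / Real.sqrt (2 * Real.pi)) := by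
  have hv : Real.toNNReal (σ ^ 2) ≠ 0 := by
    simp only [ne_eq, Real.toNNReal_eq_zero, not_le]; positivity
  have h2 : ((Real.toNNReal (σ ^ 2) : NNReal) : ℝ) = σ ^ 2 :=
    Real.coe_toNNReal _ (by positivity)
  rw [integral_gaussianReal_eq_integral_smul hv]
  have h1 : ∀ x : ℝ, gaussianPDFReal 0 (Real.toNNReal (σ ^ 2)) x • |x|
      = (fun y : ℝ => (Real.sqrt (2 * Real.pi * σ ^ 2))⁻¹ *
          (y ^ (1 : ℝ) * Real.exp (-(1 / (2 * σ ^ 2)) * y ^ (2 : ℝ)))) |x| := by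
    intro x
    simp only [gaussianPDFReal, h2, smul_eq_mul, Real.rpow_one, Real.rpow_two, sq_abs, sub_zero]
    rw [show -(1 / (2 * σ ^ 2)) * x ^ 2 = -x ^ 2 / (2 * σ ^ 2) by ring]
    ring
  simp_rw [h1]
  rw [integral_comp_abs (f := fun y : ℝ => (Real.sqrt (2 * Real.pi * σ ^ 2))⁻¹ *
          (y ^ (1 : ℝ) * Real.exp (-(1 / (2 * σ ^ 2)) * y ^ (2 : ℝ)))), integral_const_mul,
    integral_rpow_mul_exp_neg_mul_rpow (by norm_num) (by norm_num) (by positivity)]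
  rw [show (-(1 + 1) / 2 : ℝ) = -1 by norm_num, show ((1 + 1) / 2 : ℝ) = 1 by norm_num,
    Real.Gamma_one, Real.rpow_neg_one, Real.sqrt_mul (by positivity), Real.sqrt_sq hσ.le]
  field_simp

/-- If `X, Y` are centered integrable random variables and `X − Y` is Gaussian with mean 0 and
variance `σ²`, then `E[max(X, Y)] = σ/√(2π)`. -/
theorem expectation_max_of_gaussian_difference
    {Ω : Type*} [MeasurableSpace Ω] (μ : Measure Ω) [IsProbabilityMeasure μ]
    (X Y : Ω → ℝ) (hX : Integrable X μ) (hY : Integrable Y μ)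
    (hXmean : ∫ ω, X ω ∂μ = 0) (hYmean : ∫ ω, Y ω ∂μ = 0)
    (σ : ℝ) (hσ : 0 ≤ σ)
    (hgauss : Measure.map (fun ω => X ω - Y ω) μ = gaussianReal 0 (Real.toNNReal (σ ^ 2))) :
    ∫ ω, max (X ω) (Y ω) ∂μ = σ / Real.sqrt (2 * Real.pi) := by
  have hXY : Integrable (fun ω => X ω - Y ω) μ := hX.sub hY
  have habs : ∫ ω, |X ω - Y ω| ∂μ = 2 * (σ / Real.sqrt (2 * Real.pi)) := by
    have h := integral_map (μ := μ) hXY.aemeasurable (f := fun x : ℝ => |x|)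
      (continuous_abs.aestronglyMeasurable)
    rw [← h, hgauss]
    rcases hσ.eq_or_lt with h0 | h0
    · subst h0
      simp
    · exact integral_abs_gaussianReal_aux σ h0
  have hm : ∀ ω, max (X ω) (Y ω) = (1 / 2) * ((X ω + Y ω) + |X ω - Y ω|) := by
    intro ω
    rcases le_total (X ω) (Y ω) with h | h
    · rw [max_eq_right h, abs_of_nonpos (by linarith)]; ring
    · rw [max_eq_left h, abs_of_nonneg (by linarith)]; ring
  have hS : Integrable (fun ω => X ω + Y ω) μ := hX.add hY
  simp_rw [hm]
  rw [integral_const_mul, integral_add hS hXY.abs, integral_add hX hY, hXmean, hYmean,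
    habs]
  ring
end

section
/- Let N and C be integers with 0 < C ≤ N, let z ∈ ℝ^N, and let y be the Euclidean projection of z onto the capped simplex Y, i.e., the unique point of Y minimizing ‖z − y‖. Then there exists ρ ≥ 0 such that y^n = min(1, max(0, z^n − ρ)) for every n = 1, …, N, and moreover either ρ = 0 or ∑_{n=1}^N y^n = C. -/
/-- The capped simplex: admissible cache configurations with `N` files and cache size `C`. -/
def cappedSimplex (N C : ℕ) : Set (EuclideanSpace ℝ (Fin N)) :=
  {y | (∀ n, 0 ≤ y n ∧ y n ≤ 1) ∧ ∑ n, y n ≤ (C : ℝ)}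

/-- KKT structure of the Euclidean projection onto the capped simplex: the projection `y` of
`z` is a soft-thresholding `yⁿ = min(1, max(0, zⁿ − ρ))` for some multiplier `ρ ≥ 0`, and
either `ρ = 0` or the capacity constraint is tight, `∑ₙ yⁿ = C`. -/
theorem projection_cappedSimplex_soft_threshold
    (N C : ℕ) (hC : 0 < C) (hCN : C ≤ N)
    (z y : EuclideanSpace ℝ (Fin N))
    (hyY : y ∈ cappedSimplex N C)
    -- y is the Euclidean projection of z onto the capped simplex
    (hproj : ∀ u ∈ cappedSimplex N C, ‖z - y‖ ≤ ‖z - u‖) :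
    ∃ ρ : ℝ, 0 ≤ ρ ∧ (∀ n, y n = min 1 (max 0 (z n - ρ))) ∧
      (ρ = 0 ∨ ∑ n, y n = (C : ℝ)) := by
  -- existence of the multiplier
  have hex : ∃ ρ : ℝ, 0 ≤ ρ ∧ ∑ n, min 1 (max 0 (z n - ρ)) ≤ (C : ℝ) ∧
      (ρ = 0 ∨ ∑ n, min 1 (max 0 (z n - ρ)) = (C : ℝ)) := by
    by_cases h0 : ∑ n, min 1 (max 0 (z n - 0)) ≤ (C : ℝ)
    · exact ⟨0, le_refl _, h0, Or.inl rfl⟩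
    · have hM : (0 : ℝ) ≤ ∑ n, |z n| := Finset.sum_nonneg fun n _ => abs_nonneg _
      have hcont : Continuous fun ρ : ℝ => ∑ n, min 1 (max 0 (z n - ρ)) := by fun_prop
      have hz : ∑ n, min 1 (max 0 (z n - ∑ m, |z m|)) = 0 := by
        apply Finset.sum_eq_zero
        intro n _
        have h1 : |z n| ≤ ∑ m, |z m| :=
          Finset.single_le_sum (f := fun m => |z m|) (fun m _ => abs_nonneg _) (Finset.mem_univ n)
        have h2 := le_abs_self (z n)
        rw [max_eq_left (by linarith)]
        norm_num
      obtain ⟨ρ, hρ, he⟩ := intermediate_value_Icc' hM hcont.continuousOn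
        (show (C : ℝ) ∈ _ from ⟨by simp only [hz]; positivity, (not_le.mp h0).le⟩)
      exact ⟨ρ, hρ.1, le_of_eq he, Or.inr he⟩
  obtain ⟨ρ, hρ, hle, hcs⟩ := hex
  obtain ⟨hy, hyC⟩ := hyY
  have hp := hproj (WithLp.toLp 2 fun n => min 1 (max 0 (z n - ρ)))
    ⟨fun n => ⟨le_min zero_le_one (le_max_left _ _), min_le_left _ _⟩, hle⟩
  have hp2 := pow_le_pow_left₀ (norm_nonneg _) hp 2
  rw [EuclideanSpace.real_norm_sq_eq, EuclideanSpace.real_norm_sq_eq] at hp2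
  simp only [PiLp.sub_apply] at hp2
  have hpt : ∀ n, (z n - min 1 (max 0 (z n - ρ))) ^ 2 + (y n - min 1 (max 0 (z n - ρ))) ^ 2
      - 2 * ρ * (y n - min 1 (max 0 (z n - ρ))) ≤ (z n - y n) ^ 2 := by
    intro n
    obtain ⟨h0, h1⟩ := hy n
    rcases le_total (z n - ρ) 0 with h | h
    · rw [max_eq_left h, min_eq_right zero_le_one]
      nlinarith
    · rw [max_eq_right h]
      rcases le_total (z n - ρ) 1 with h' | h'
      · rw [min_eq_right h']
        nlinarith
      · rw [min_eq_left h']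
        nlinarith
  have hs := Finset.sum_le_sum fun n (_ : n ∈ Finset.univ) => hpt n
  rw [Finset.sum_sub_distrib, Finset.sum_add_distrib, ← Finset.mul_sum,
    Finset.sum_sub_distrib] at hs
  have hc : ρ * (∑ n, y n - ∑ n, min 1 (max 0 (z n - ρ))) ≤ 0 := by
    rcases hcs with h | h
    · rw [h]; simp
    · rw [h]; exact mul_nonpos_of_nonneg_of_nonpos hρ (by linarith)
  have hsum : ∑ n, (y n - min 1 (max 0 (z n - ρ))) ^ 2 = 0 :=
    le_antisymm (by linarith) (Finset.sum_nonneg fun n _ => sq_nonneg _)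
  have heq : ∀ n, y n = min 1 (max 0 (z n - ρ)) := by
    intro n
    have := (Finset.sum_eq_zero_iff_of_nonneg fun n _ => sq_nonneg _).mp hsum n (Finset.mem_univ n)
    exact sub_eq_zero.mp (pow_eq_zero_iff two_ne_zero |>.mp this)
  refine ⟨ρ, hρ, heq, hcs.imp id fun h => ?_⟩
  rw [← h]
  exact Finset.sum_congr rfl fun n _ => heq n
end

section
/- Let N and C be integers with 0 < C ≤ N, let z ∈ ℝ^N, and let y be the Euclidean projection of z onto the capped simplex Y, i.e., the unique point of Y minimizing ‖z − y‖. Then the projection preserves the ordering of coordinates: for all indices i, j, if z^i ≥ z^j then y^i ≥ y^j. -/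
/-- The Euclidean projection onto the capped simplex preserves the ordering of coordinates:
if `zⁱ ≥ zʲ` then `yⁱ ≥ yʲ` for the projection `y` of `z`. -/
theorem projection_cappedSimplex_order_preserving
    (N C : ℕ) (hC : 0 < C) (hCN : C ≤ N)
    (z y : EuclideanSpace ℝ (Fin N))
    (hyY : y ∈ cappedSimplex N C)
    -- y is the Euclidean projection of z onto the capped simplex
    (hproj : ∀ u ∈ cappedSimplex N C, ‖z - y‖ ≤ ‖z - u‖) :
    ∀ i j : Fin N, z j ≤ z i → y j ≤ y i := by
  intro i j hz
  by_contra! hlt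
  obtain ⟨hb, hs⟩ := hyY
  have hij : i ≠ j := by
    rintro rfl
    exact lt_irrefl _ hlt
  obtain ⟨d, hd⟩ : ∃ d : ℝ, d = (y j - y i) / 2 := ⟨_, rfl⟩
  have hdpos : 0 < d := by linarith
  let u : EuclideanSpace ℝ (Fin N) := WithLp.toLp 2
    (fun n => y n + (if n = i then d else 0) + (if n = j then -d else 0))
  have hu : ∀ n, u n = y n + (if n = i then d else 0) + (if n = j then -d else 0) :=
    fun n => rfl
  have hmem : u ∈ cappedSimplex N C := by
    refine ⟨fun n => ?_, ?_⟩
    · rw [hu]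
      have h1 := hb n
      have h2 := hb i
      have h3 := hb j
      by_cases hi : n = i
      · subst hi
        simp only [if_true, if_neg hij]
        constructor <;> linarith
      · by_cases hj : n = j
        · subst hj
          simp only [if_true, if_neg hi]
          constructor <;> linarith
        · simp only [if_neg hi, if_neg hj]
          constructor <;> linarith
    · simp only [hu, Finset.sum_add_distrib, Finset.sum_ite_eq', Finset.mem_univ, if_true]
      linarith
  have h := hproj u hmem
  have hsq : ‖z - y‖ ^ 2 ≤ ‖z - u‖ ^ 2 := by gcongr
  rw [EuclideanSpace.real_norm_sq_eq, EuclideanSpace.real_norm_sq_eq] at hsq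
  have hterm : ∀ n, (z - u) n ^ 2 = (z - y) n ^ 2
      + (if n = i then -2 * d * (z i - y i) + d ^ 2 else 0)
      + (if n = j then 2 * d * (z j - y j) + d ^ 2 else 0) := by
    intro n
    simp only [PiLp.sub_apply, hu]
    by_cases hi : n = i
    · subst hi
      simp only [if_true, if_neg hij]
      ring
    · by_cases hj : n = j
      · subst hj
        simp only [if_true, if_neg hi]
        ring
      · simp only [if_neg hi, if_neg hj]
        ring
  simp only [hterm, Finset.sum_add_distrib, Finset.sum_ite_eq', Finset.mem_univ, if_true] at hsq
  have hy : y j = y i + 2 * d := by linarith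
  rw [hy] at hsq
  nlinarith [mul_nonneg hdpos.le (sub_nonneg.2 hz), mul_pos hdpos hdpos]
end
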